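/- Addition formula for the elliptic 6j-symbols: for integers 0 ≤ n, m ≤ k and all α, β, γ, δ, ρ, σ ∈ ℂ such that every bracket appearing in a denominator of the R-symbols involved is nonzero, one has R_n^m(α,β,γ,δ;k) = Σ_{l=0}^{k} R_n^l(α,β,ρ,σ;k) · R_l^m(ρ,σ,γ,δ;k). -/

import Mathlib

noncomputable section

open Complex Finset

namespace Ell

/-- `x^s = exp(-iπ s /(r τ))`. -/
def xp (τ : ℂ) (r : ℝ) (s : ℂ) : ℂ :=
  Complex.exp (-Complex.I * (Real.pi : ℂ) * s / ((r : ℂ) * τ))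

/-- `Θ_p(z) = ∏_{j ≥ 0} (1 - z p^j)(1 - p^{j+1}/z)(1 - p^{j+1})`. -/
def Theta (p z : ℂ) : ℂ :=
  ∏' j : ℕ, ((1 - z * p ^ j) * (1 - p ^ (j + 1) / z) * (1 - p ^ (j + 1)))

/-- The bracket `[u] = x^{u²/r - u} Θ_p(x^{2u})` with `p = x^{2r}`. -/
def br (τ : ℂ) (r : ℝ) (u : ℂ) : ℂ :=
  xp τ r (u ^ 2 / (r : ℂ) - u) * Theta (xp τ r (2 * (r : ℂ))) (xp τ r (2 * u))

/-- Elliptic shifted factorial `[u]_n = ∏_{j=0}^{n-1} [u+j]`. -/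
def brF (τ : ℂ) (r : ℝ) (u : ℂ) (n : ℕ) : ℂ :=
  ∏ j ∈ Finset.range n, br τ r (u + (j : ℂ))

/-- Elliptic binomial coefficient `C_n^k(α,β,γ)`. -/
def Cnk (τ : ℂ) (r : ℝ) (k n : ℕ) (α β γ : ℂ) : ℂ :=
  brF τ r 1 k / (brF τ r 1 n * brF τ r 1 (k - n)) *
    (brF τ r (α - γ) n * brF τ r (α + γ + (k : ℂ) - (n : ℂ)) n *
      brF τ r (α - β) (k - n) * brF τ r (α + β + (n : ℂ)) (k - n)) /
    (brF τ r (β - γ + (n : ℂ) - (k : ℂ)) n * brF τ r (γ - β - (n : ℂ)) (k - n) *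
      brF τ r (β + γ) k)

/-- The elliptic 6j-symbol `R_n^m(α,β,γ,δ;k)`. -/
def Rnm (τ : ℂ) (r : ℝ) (k n m : ℕ) (α β γ δ : ℂ) : ℂ :=
  ∑ j ∈ Finset.range (min n m + 1),
    Cnk τ r n j α γ (β + (k : ℂ) - (n : ℂ)) * Cnk τ r (k - j) (m - j) β (γ + (j : ℂ)) δ

/-- Terminating very-well-poised elliptic hypergeometric sum with explicit
truncation `N`:  `Σ_{j=0}^N ([u₀+2j]/[u₀]) ([u₀]_j/[1]_j) ∏ᵢ [uᵢ]_j/[u₀+1-uᵢ]_j`. -/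
def Vsum (τ : ℂ) (r : ℝ) (u₀ : ℂ) (us : List ℂ) (N : ℕ) : ℂ :=
  ∑ j ∈ Finset.range (N + 1),
    br τ r (u₀ + 2 * (j : ℂ)) / br τ r u₀ * (brF τ r u₀ j / brF τ r 1 j) *
      (us.map fun ui => brF τ r ui j / brF τ r (u₀ + 1 - ui) j).prod

/-- "Every bracket appearing in a denominator of `C_n^k(·,β,γ)` is nonzero". -/
def CdenomNZ (τ : ℂ) (r : ℝ) (k n : ℕ) (β γ : ℂ) : Prop :=
  brF τ r 1 n ≠ 0 ∧ brF τ r 1 (k - n) ≠ 0 ∧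
    brF τ r (β - γ + (n : ℂ) - (k : ℂ)) n ≠ 0 ∧
    brF τ r (γ - β - (n : ℂ)) (k - n) ≠ 0 ∧ brF τ r (β + γ) k ≠ 0

/-- "Every bracket appearing in a denominator of `R_n^m(α,β,γ,δ;k)` is nonzero". -/
def RdenomNZ (τ : ℂ) (r : ℝ) (k n m : ℕ) (β γ δ : ℂ) : Prop :=
  ∀ j ≤ min n m,
    CdenomNZ τ r n j γ (β + (k : ℂ) - (n : ℂ)) ∧
      CdenomNZ τ r (k - j) (m - j) (γ + (j : ℂ)) δ

/-- Jacobi theta `ϑ₁(v|σ)`. -/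
def th1 (v σ : ℂ) : ℂ :=
  2 * Complex.exp (2 * (Real.pi : ℂ) * Complex.I * σ / 8) *
    (∏' n : ℕ, (1 - Complex.exp (2 * (Real.pi : ℂ) * Complex.I * σ) ^ (n + 1))) *
    Complex.sin ((Real.pi : ℂ) * v) *
    ∏' n : ℕ,
      (1 - 2 * Complex.exp (2 * (Real.pi : ℂ) * Complex.I * σ) ^ (n + 1) *
            Complex.cos (2 * (Real.pi : ℂ) * v) +
        Complex.exp (2 * (Real.pi : ℂ) * Complex.I * σ) ^ (2 * (n + 1)))

/-- Jacobi theta `ϑ₀(v|σ)`. -/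
def th0 (v σ : ℂ) : ℂ :=
  -Complex.I * Complex.exp ((Real.pi : ℂ) * Complex.I * (v + σ / 4)) * th1 (v + σ / 2) σ

/-- Jacobi theta `ϑ₂(v|σ)`. -/
def th2 (v σ : ℂ) : ℂ := th1 (v + 1 / 2) σ

/-- Jacobi theta `ϑ₃(v|σ)`. -/
def th3 (v σ : ℂ) : ℂ :=
  Complex.exp ((Real.pi : ℂ) * Complex.I * (v + σ / 4)) * th1 (v + (σ + 1) / 2) σ

/-- Intertwining vector component `ψ_ε(u)^a_b`, `ε ∈ {1, -1}`. -/
def psi (τ : ℂ) (r : ℝ) (u : ℂ) (ε : ℤ) (a b : ℤ) : ℂ :=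
  if ε = 1 then th0 ((((a : ℂ) - (b : ℂ)) * u + (a : ℂ)) / (2 * (r : ℂ))) (τ / 2)
  else th3 ((((a : ℂ) - (b : ℂ)) * u + (a : ℂ)) / (2 * (r : ℂ))) (τ / 2)

/-- The constant `C = x^{-r/4} e^{-iπ/4} τ^{1/2}`. -/
def Cc (τ : ℂ) (r : ℝ) : ℂ :=
  xp τ r (-(r : ℂ) / 4) * Complex.exp (-(Real.pi : ℂ) * Complex.I / 4) * τ ^ (1 / 2 : ℂ)

/-- Dual intertwining vector component `ψ*_ε(u)^a_b = -ε(a-b) C² ψ_{-ε}(u-1)^a_b/(2[b][u])`. -/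
def psiStar (τ : ℂ) (r : ℝ) (u : ℂ) (ε : ℤ) (a b : ℤ) : ℂ :=
  -(ε : ℂ) * ((a : ℂ) - (b : ℂ)) * Cc τ r ^ 2 * psi τ r (u - 1) (-ε) a b /
    (2 * br τ r (b : ℂ) * br τ r u)

/-- Sign attached to a boolean. -/
def sg (b : Bool) : ℤ := if b then 1 else -1

/-- Canonical path from `a`: up for `j ≤ n`, down afterwards. -/
def cpathZ (a n : ℤ) (j : ℕ) : ℤ := if (j : ℤ) ≤ n then a + j else a + 2 * n - j

/-- Admissibility: `a - b ∈ {-k, -k+2, …, k}`. -/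
def adm (k : ℕ) (a b : ℤ) : Prop := (a - b).natAbs ≤ k ∧ (a - b - (k : ℤ)) % 2 = 0

instance (k : ℕ) (a b : ℤ) : Decidable (adm k a b) := by unfold adm; infer_instance

/-- Fused intertwining vector component `ψ^{(k)}_μ(u)^a_b` (zero if `a,b` not admissible). -/
def psiF (τ : ℂ) (r : ℝ) (k : ℕ) (μ : ℤ) (u : ℂ) (a b : ℤ) : ℂ :=
  if adm k a b then
    ∑ ε ∈ Finset.univ.filter fun ε : Fin k → Bool => (∑ j, sg (ε j)) = μ,
      ∏ j : Fin k,
        psi τ r (u + (k : ℂ) - (((j : ℕ) + 1 : ℕ) : ℂ)) (sg (ε j))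
          (cpathZ a (((k : ℤ) - (a - b)) / 2) (j : ℕ))
          (cpathZ a (((k : ℤ) - (a - b)) / 2) ((j : ℕ) + 1))
  else 0

/-- Partial-sum path attached to a sign sequence `δ`, starting at `a`. -/
def spath (k : ℕ) (a : ℤ) (δ : Fin k → Bool) (j : ℕ) : ℤ :=
  a + ∑ i ∈ Finset.range j, if h : i < k then sg (δ ⟨i, h⟩) else 0

/-- Fused dual intertwining vector component `ψ*^{(k)}_μ(u)^b_a`
(sum over all admissible paths from `a` to `b`; zero if not admissible). -/
def psiStarF (τ : ℂ) (r : ℝ) (k : ℕ) (μ : ℤ) (u : ℂ) (b a : ℤ) : ℂ :=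
  if adm k a b then
    ∑ δ ∈ Finset.univ.filter fun δ : Fin k → Bool => (∑ j, sg (δ j)) = b - a,
      ∏ j : Fin k,
        psiStar τ r (u + (k : ℂ) - (((j : ℕ) + 1 : ℕ) : ℂ))
          (if ((j : ℕ) + 1 : ℤ) ≤ ((k : ℤ) + μ) / 2 then 1 else -1)
          (spath k a δ ((j : ℕ) + 1)) (spath k a δ (j : ℕ))
  else 0

/-- The `L`-matrix `L^{(k)}(a,b;c,d|u) = Σ_μ ψ*^{(k)}_μ(u)^d_c ψ^{(k)}_μ(u)^a_b`. -/
def Lk (τ : ℂ) (r : ℝ) (k : ℕ) (u : ℂ) (a b c d : ℤ) : ℂ :=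
  ∑ i ∈ Finset.range (k + 1),
    psiStarF τ r k ((k : ℤ) - 2 * (i : ℤ)) u d c * psiF τ r k ((k : ℤ) - 2 * (i : ℤ)) u a b

/-- Normalized face weight `W̄(a,b;d,c|u)` (arguments ordered (NW, NE; SW, SE)). -/
def Wb (τ : ℂ) (r : ℝ) (u : ℂ) (a b d c : ℤ) : ℂ :=
  if b = a + 1 ∧ d = a + 1 ∧ c = a + 2 then 1
  else if b = a - 1 ∧ d = a - 1 ∧ c = a - 2 then 1
  else if b = a + 1 ∧ d = a + 1 ∧ c = a then
    br τ r ((a : ℂ) - u) * br τ r 1 / (br τ r (a : ℂ) * br τ r (1 + u))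
  else if b = a - 1 ∧ d = a - 1 ∧ c = a then
    br τ r ((a : ℂ) + u) * br τ r 1 / (br τ r (a : ℂ) * br τ r (1 + u))
  else if b = a + 1 ∧ d = a - 1 ∧ c = a then
    br τ r ((a : ℂ) + 1) * br τ r u / (br τ r (a : ℂ) * br τ r (1 + u))
  else if b = a - 1 ∧ d = a + 1 ∧ c = a then
    br τ r ((a : ℂ) - 1) * br τ r u / (br τ r (a : ℂ) * br τ r (1 + u))
  else 0

/-- Sequence with prescribed endpoints `d`, `c` and free interior values `f`. -/
def seqI (k : ℕ) (d c : ℤ) (f : Fin (k - 1) → ℤ) (j : ℕ) : ℤ :=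
  if h0 : j = 0 then d
  else if hj : j < k then f ⟨j - 1, by omega⟩ else c

/-- Fused face weight `W^{(k,1)}(a,b;d,c|u)`. -/
def Wk1 (τ : ℂ) (r : ℝ) (k : ℕ) (u : ℂ) (a b d c : ℤ) : ℂ :=
  if adm k a b then
    ∑' f : Fin (k - 1) → ℤ,
      ∏ j ∈ Finset.range k,
        Wb τ r (u + (k : ℂ) - ((j : ℂ) + 1))
          (cpathZ a (((k : ℤ) - (a - b)) / 2) j)
          (cpathZ a (((k : ℤ) - (a - b)) / 2) (j + 1))
          (seqI k d c f j) (seqI k d c f (j + 1))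
  else 0

/-- Fused face weight `W^{(k,l)}(a,b;d,c|u)`. -/
def Wkl (τ : ℂ) (r : ℝ) (k l : ℕ) (u : ℂ) (a b d c : ℤ) : ℂ :=
  if adm l b c then
    ∑' g : Fin (l - 1) → ℤ,
      ∏ i ∈ Finset.range l,
        Wk1 τ r k (u - (l : ℂ) + ((i : ℂ) + 1))
          (seqI l a d g i) (cpathZ b (((l : ℤ) - (b - c)) / 2) i)
          (seqI l a d g (i + 1)) (cpathZ b (((l : ℤ) - (b - c)) / 2) (i + 1))
  else 0

/-- Eight-vertex weight `ā(u)`. -/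
def aw (τ : ℂ) (r : ℝ) (u : ℂ) : ℂ :=
  th2 (1 / (2 * (r : ℂ))) (τ / 2) * th2 (u / (2 * (r : ℂ))) (τ / 2) /
    (th2 0 (τ / 2) * th2 ((1 + u) / (2 * (r : ℂ))) (τ / 2))

/-- Eight-vertex weight `b̄(u)`. -/
def bw (τ : ℂ) (r : ℝ) (u : ℂ) : ℂ :=
  th2 (1 / (2 * (r : ℂ))) (τ / 2) * th1 (u / (2 * (r : ℂ))) (τ / 2) /
    (th2 0 (τ / 2) * th1 ((1 + u) / (2 * (r : ℂ))) (τ / 2))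

/-- Eight-vertex weight `c̄(u)`. -/
def cw (τ : ℂ) (r : ℝ) (u : ℂ) : ℂ :=
  th1 (1 / (2 * (r : ℂ))) (τ / 2) * th2 (u / (2 * (r : ℂ))) (τ / 2) /
    (th2 0 (τ / 2) * th1 ((1 + u) / (2 * (r : ℂ))) (τ / 2))

/-- Eight-vertex weight `d̄(u)`. -/
def dw (τ : ℂ) (r : ℝ) (u : ℂ) : ℂ :=
  -(th1 (1 / (2 * (r : ℂ))) (τ / 2) * th1 (u / (2 * (r : ℂ))) (τ / 2)) /
    (th2 0 (τ / 2) * th2 ((1 + u) / (2 * (r : ℂ))) (τ / 2))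

/-- The normalized eight-vertex `R`-matrix entry `R̄(u)_{(ε₁,ε₂),(ε₁',ε₂')}`. -/
def Rbar (τ : ℂ) (r : ℝ) (u : ℂ) (e1 e2 e1' e2' : ℤ) : ℂ :=
  if e1' = e1 ∧ e2' = e2 ∧ e1 = e2 then aw τ r u
  else if e1' = e1 ∧ e2' = e2 ∧ e1 = -e2 then bw τ r u
  else if e1' = e2 ∧ e2' = e1 ∧ e1 = -e2 then cw τ r u
  else if e1' = -e1 ∧ e2' = -e2 ∧ e1 = e2 then dw τ r u
  else 0

/-- Sklyanin standard-basis vector `v_+(z)`. -/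
def vp (τ z : ℂ) : ℂ := th3 (2 * z) (2 * τ) - th2 (2 * z) (2 * τ)

/-- Sklyanin standard-basis vector `v_-(z)`. -/
def vm (τ z : ℂ) : ℂ := th3 (2 * z) (2 * τ) + th2 (2 * z) (2 * τ)


section TripleProduct
open Filter Topology

def qP (p : ℂ) (n : ℕ) : ℂ := ∏ i ∈ Finset.range n, (1 - p ^ (i + 1))

def iQ (p : ℂ) (m : ℤ) : ℂ := if m < 0 then 0 else (qP p m.toNat)⁻¹

lemma pow_ne_one' {p : ℂ} (hp : ‖p‖ < 1) (i : ℕ) : 1 - p ^ (i + 1) ≠ 0 := by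
  intro h
  have h1 : p ^ (i + 1) = 1 := (sub_eq_zero.mp h).symm
  have h2 : ‖p‖ ^ (i + 1) = 1 := by rw [← norm_pow, h1, norm_one]
  have h3 : ‖p‖ ^ (i + 1) < 1 := pow_lt_one₀ (norm_nonneg _) hp (by omega)
  linarith

lemma qP_ne {p : ℂ} (hp : ‖p‖ < 1) (n : ℕ) : qP p n ≠ 0 :=
  Finset.prod_ne_zero_iff.mpr fun i _ => pow_ne_one' hp i

lemma iQ_step {p : ℂ} (hp : ‖p‖ < 1) (m : ℤ) :
    iQ p (m - 1) = (1 - p ^ m) * iQ p m := by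
  unfold iQ
  rcases lt_trichotomy m 0 with h | h | h
  · rw [if_pos (by omega), if_pos h, mul_zero]
  · subst h; simp
  · rw [if_neg (by omega), if_neg (by omega)]
    obtain ⟨k, rfl⟩ : ∃ k : ℕ, m = k + 1 := ⟨(m - 1).toNat, by omega⟩
    have e1 : ((k : ℤ) + 1 - 1).toNat = k := by omega
    have e2 : ((k : ℤ) + 1).toNat = k + 1 := by omega
    rw [e1, e2]
    have : p ^ ((k : ℤ) + 1) = p ^ (k + 1) := by exact_mod_cast zpow_natCast p (k + 1)
    rw [this]
    have h1 := qP_ne hp k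
    have h2 := pow_ne_one' hp k
    have : qP p (k + 1) = qP p k * (1 - p ^ (k + 1)) := Finset.prod_range_succ _ _
    rw [this]
    field_simp

def PN (p z : ℂ) (N : ℕ) : ℂ := ∏ j ∈ Finset.range N, ((1 - z * p ^ j) * (1 - p ^ (j + 1) / z))

lemma finite_jtp {p z : ℂ} (hp0 : p ≠ 0) (hp : ‖p‖ < 1) (hz : z ≠ 0) (s : ℤ → ℂ) (hs0 : s 0 = 1)
    (hs : ∀ n, s (n + 1) = - p ^ n * s n) (N : ℕ) :
    HasSum (fun n : ℤ => s n * qP p (2 * N) * iQ p (N - n) * iQ p (N + n) * z ^ n) (PN p z N) := by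
  induction N with
  | zero =>
    have : PN p z 0 = s 0 * qP p (2 * 0) * iQ p ((0:ℕ) - 0) * iQ p ((0:ℕ) + 0) * z ^ (0:ℤ) := by
      simp [PN, hs0, qP, iQ]
    rw [this]
    apply hasSum_single
    intro n hn
    rcases lt_or_gt_of_ne hn with h | h
    · have : iQ p ((0:ℕ) + n) = 0 := by simp [iQ, h]
      rw [this]; simp
    · have : iQ p ((0:ℕ) - n) = 0 := by simp [iQ, h]
      rw [this]; simp
  | succ N ih =>
    have hP : PN p z (N + 1) = (1 + p ^ (2 * N + 1)) * PN p z N - z * p ^ N * PN p z N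
        - p ^ (N + 1) / z * PN p z N := by
      rw [PN, Finset.prod_range_succ, ← PN]
      field_simp
      ring
    rw [hP]
    have i1 := ih.mul_left (1 + p ^ (2 * N + 1))
    have i2 := ((Equiv.subRight (1:ℤ)).hasSum_iff.mpr ih).mul_left (z * p ^ N)
    have i3 := ((Equiv.addRight (1:ℤ)).hasSum_iff.mpr ih).mul_left (p ^ (N + 1) / z)
    have h3 := (i1.sub i2).sub i3
    have hh : ∀ f g : ℤ → ℂ, (∀ n, f n = g n) → ∀ a, HasSum g a → HasSum f a :=
      fun f g h a hg => by rw [funext h]; exact hg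
    refine hh _ _ (fun n => ?_) _ h3
    simp only [Function.comp_apply, Equiv.subRight_apply, Equiv.coe_addRight]
    have q1 : qP p (2 * (N + 1)) = qP p (2 * N) * (1 - p ^ (2 * N + 1)) * (1 - p ^ (2 * N + 2)) := by
      rw [show 2 * (N + 1) = 2 * N + 1 + 1 by ring, qP, Finset.prod_range_succ,
        Finset.prod_range_succ, ← qP]
    have sm : s (n - 1) = - (p / p ^ n) * s n := by
      have := hs (n - 1)
      rw [sub_add_cancel, zpow_sub_one₀ hp0] at this
      rw [this]
      have := zpow_ne_zero n hp0
      field_simp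
    have a1 : iQ p ((N:ℤ) - n) = (1 - p ^ (((N:ℕ):ℤ) + 1 - n)) * iQ p ((N:ℤ) + 1 - n) := by
      rw [← iQ_step hp]; congr 1; ring
    have a2 : iQ p ((N:ℤ) - (n + 1)) = (1 - p ^ (((N:ℕ):ℤ) - n)) * iQ p ((N:ℤ) - n) := by
      rw [← iQ_step hp]; congr 1; ring
    have b1 : iQ p ((N:ℤ) + n) = (1 - p ^ (((N:ℕ):ℤ) + 1 + n)) * iQ p ((N:ℤ) + 1 + n) := by
      rw [← iQ_step hp]; congr 1; ring
    have b2 : iQ p ((N:ℤ) + (n - 1)) = (1 - p ^ (((N:ℕ):ℤ) + n)) * iQ p ((N:ℤ) + n) := by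
      rw [← iQ_step hp]; congr 1; ring
    have a0 : (N:ℤ) - (n - 1) = N + 1 - n := by ring
    have b0 : (N:ℤ) + (n + 1) = N + 1 + n := by ring
    push_cast
    rw [a0, b0, a2, b2, a1, b1, q1, sm, hs n, zpow_sub_one₀ hz, zpow_add_one₀ hz]
    rw [zpow_sub₀ hp0, zpow_sub₀ hp0, zpow_add₀ hp0 _ n, zpow_add₀ hp0 _ n, zpow_add_one₀ hp0,
      zpow_natCast]
    generalize iQ p ((N:ℤ) + 1 - n) = A
    generalize iQ p ((N:ℤ) + 1 + n) = B
    have hY : p ^ n ≠ 0 := zpow_ne_zero n hp0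
    rw [show p ^ (2 * N + 1) = p * (p ^ N) ^ 2 by ring,
      show p ^ (2 * N + 2) = p ^ 2 * (p ^ N) ^ 2 by ring, pow_succ p N]
    generalize p ^ n = Y at *
    generalize p ^ N = X
    field_simp
    ring

lemma qP_tendsto {p : ℂ} (hp : ‖p‖ < 1) : ∃ Q : ℂ, Q ≠ 0 ∧ Tendsto (qP p) atTop (𝓝 Q) := by
  have hsum : Summable fun i : ℕ => ‖-p ^ (i + 1)‖ := by
    simp only [norm_neg, norm_pow]
    exact (summable_nat_add_iff 1).mpr (summable_geometric_of_lt_one (norm_nonneg _) hp)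
  refine ⟨∏' i : ℕ, (1 + -p ^ (i + 1)), ?_, ?_⟩
  · apply tprod_one_add_ne_zero_of_summable _ hsum
    intro i
    rw [← sub_eq_add_neg]
    exact pow_ne_one' hp i
  · have := (multipliable_one_add_of_summable hsum).hasProd.tendsto_prod_nat
    simp only [← sub_eq_add_neg] at this ⊢
    exact this

lemma theta_summable1 {p : ℂ} (hp : ‖p‖ < 1) (z : ℂ) : Summable fun j : ℕ => ‖-(z * p ^ j)‖ := by
  simp only [norm_neg, norm_mul, norm_pow]
  exact (summable_geometric_of_lt_one (norm_nonneg _) hp).mul_left _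

lemma theta_summable2 {p : ℂ} (hp : ‖p‖ < 1) (z : ℂ) :
    Summable fun j : ℕ => ‖-(p ^ (j + 1) / z)‖ := by
  simp only [norm_neg, norm_div, norm_pow]
  exact ((summable_nat_add_iff 1).mpr
    (summable_geometric_of_lt_one (norm_nonneg _) hp)).div_const _

lemma theta_mult {p : ℂ} (hp : ‖p‖ < 1) (z : ℂ) :
    Multipliable (fun j : ℕ => ((1 - z * p ^ j) * (1 - p ^ (j + 1) / z) * (1 - p ^ (j + 1)))) := by
  have m1 := multipliable_one_add_of_summable (theta_summable1 hp z)
  have m2 := multipliable_one_add_of_summable (theta_summable2 hp z)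
  have m3 := multipliable_one_add_of_summable (theta_summable2 hp 1)
  simpa only [← sub_eq_add_neg, div_one] using (m1.mul m2).mul m3

lemma theta_ne {p z : ℂ} (hp : ‖p‖ < 1) (h1 : ∀ j : ℕ, 1 - z * p ^ j ≠ 0)
    (h2 : ∀ j : ℕ, 1 - p ^ (j + 1) / z ≠ 0) : Theta p z ≠ 0 := by
  have m1 := multipliable_one_add_of_summable (theta_summable1 hp z)
  have m2 := multipliable_one_add_of_summable (theta_summable2 hp z)
  have m3 := multipliable_one_add_of_summable (theta_summable2 hp 1)
  have e : Theta p z = (∏' j : ℕ, (1 + -(z * p ^ j))) * (∏' j : ℕ, (1 + -(p ^ (j + 1) / z))) *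
      (∏' j : ℕ, (1 + -(p ^ (j + 1) / 1))) := by
    rw [← m1.tprod_mul m2, ← (m1.mul m2).tprod_mul m3]
    simp only [← sub_eq_add_neg, div_one, Theta]
  rw [e]
  refine mul_ne_zero (mul_ne_zero ?_ ?_) ?_
  · exact tprod_one_add_ne_zero_of_summable
      (fun i => by rw [← sub_eq_add_neg]; exact h1 i) (theta_summable1 hp z)
  · exact tprod_one_add_ne_zero_of_summable
      (fun i => by rw [← sub_eq_add_neg]; exact h2 i) (theta_summable2 hp z)
  · exact tprod_one_add_ne_zero_of_summable
      (fun i => by rw [← sub_eq_add_neg, div_one]; exact pow_ne_one' hp i) (theta_summable2 hp 1)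

lemma jtp {p z : ℂ} (hp0 : p ≠ 0) (hp : ‖p‖ < 1) (hz : z ≠ 0) (s : ℤ → ℂ) (hs0 : s 0 = 1)
    (hs : ∀ n, s (n + 1) = - p ^ n * s n) (hsum : Summable fun n : ℤ => s n * z ^ n) :
    Theta p z = ∑' n : ℤ, s n * z ^ n := by
  obtain ⟨Q, hQ, hT⟩ := qP_tendsto hp
  have hTi : Tendsto (fun n => (qP p n)⁻¹) atTop (𝓝 Q⁻¹) := hT.inv₀ hQ
  obtain ⟨M, hM⟩ := (Metric.isBounded_range_of_tendsto _ hT).exists_norm_le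
  obtain ⟨M', hM'⟩ := (Metric.isBounded_range_of_tendsto _ hTi).exists_norm_le
  have hM0 : 0 ≤ M := (norm_nonneg _).trans (hM _ ⟨0, rfl⟩)
  have hM0' : 0 ≤ M' := (norm_nonneg _).trans (hM' _ ⟨0, rfl⟩)
  have hiQ : ∀ m, ‖iQ p m‖ ≤ M' := by
    intro m
    unfold iQ
    split_ifs
    · simpa using hM0'
    · exact hM' _ ⟨_, rfl⟩
  have hQ2 : Tendsto (fun N : ℕ => qP p (2 * N)) atTop (𝓝 Q) :=
    hT.comp (tendsto_id.const_mul_atTop' (by norm_num))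
  have hiT : ∀ c : ℤ, Tendsto (fun N : ℕ => iQ p (N + c)) atTop (𝓝 Q⁻¹) := by
    intro c
    have h1 : Tendsto (fun N : ℕ => ((N:ℤ) + c).toNat) atTop atTop := by
      rw [tendsto_atTop_atTop]
      intro b
      exact ⟨b + c.natAbs, fun a ha => by omega⟩
    refine (hTi.comp h1).congr' ?_
    filter_upwards [eventually_ge_atTop c.natAbs] with N hN
    simp only [Function.comp_apply, iQ]
    rw [if_neg (by omega)]
  have key : Tendsto (fun N : ℕ => ∑' n : ℤ, s n * qP p (2 * N) * iQ p (N - n) * iQ p (N + n) * z ^ n)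
      atTop (𝓝 (∑' n : ℤ, s n * Q * Q⁻¹ * Q⁻¹ * z ^ n)) := by
    apply tendsto_tsum_of_dominated_convergence (bound := fun n => ‖s n * z ^ n‖ * (M * M' * M'))
    · exact hsum.norm.mul_right _
    · intro n
      have h1 := hiT (-n)
      simp only [← sub_eq_add_neg] at h1
      exact (((tendsto_const_nhds.mul hQ2).mul h1).mul (hiT n)).mul tendsto_const_nhds
    · refine Eventually.of_forall fun N n => ?_
      have : ‖s n * qP p (2 * N) * iQ p (N - n) * iQ p (N + n) * z ^ n‖
        = ‖s n * z ^ n‖ * (‖qP p (2 * N)‖ * ‖iQ p (N - n)‖ * ‖iQ p (N + n)‖) := by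
        simp only [norm_mul]; ring
      rw [this]
      have h1 := hM _ ⟨2 * N, rfl⟩
      have h2 := hiQ (N - n)
      have h3 := hiQ (N + n)
      gcongr
  have e1 : ∀ N : ℕ, ∑' n : ℤ, s n * qP p (2 * N) * iQ p (N - n) * iQ p (N + n) * z ^ n = PN p z N :=
    fun N => (finite_jtp hp0 hp hz s hs0 hs N).tsum_eq
  simp only [e1] at key
  have k2 := key.mul hT
  have k3 := (theta_mult hp z).hasProd.tendsto_prod_nat
  have e2 : ∀ N, ∏ i ∈ Finset.range N, ((1 - z * p ^ i) * (1 - p ^ (i + 1) / z) * (1 - p ^ (i + 1)))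
      = PN p z N * qP p N := fun N => by rw [PN, qP, ← Finset.prod_mul_distrib]
  simp only [e2] at k3
  have := tendsto_nhds_unique k3 k2
  rw [Theta, this, ← tsum_mul_right]
  congr 1
  funext n
  field_simp
end TripleProduct
section BrFacts
open Filter Topology

lemma tau'_im {τ : ℂ} (hτ : 0 < τ.im) : 0 < (-1 / τ).im := by
  have h0 : τ ≠ 0 := by rintro rfl; simp at hτ
  rw [neg_div, neg_im, one_div, Complex.inv_im, neg_div, neg_neg]
  exact div_pos hτ (Complex.normSq_pos.mpr h0)

lemma xp_p (τ : ℂ) (r : ℝ) (hr : 0 < r) :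
    xp τ r (2 * (r : ℂ)) = cexp (2 * Real.pi * I * (-1 / τ)) := by
  have : (r : ℂ) ≠ 0 := by exact_mod_cast hr.ne'
  unfold xp
  congr 1
  by_cases h : τ = 0
  · simp [h]
  field_simp

lemma p_norm {τ : ℂ} (hτ : 0 < τ.im) : ‖cexp (2 * Real.pi * I * (-1 / τ))‖ < 1 := by
  rw [Complex.norm_exp]
  have h := tau'_im hτ
  generalize -1 / τ = t at *
  have : (2 * Real.pi * I * t).re = - (2 * Real.pi * t.im) := by
    simp
  rw [this]
  apply Real.exp_lt_one_iff.mpr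
  have := Real.pi_pos
  nlinarith [mul_pos this h]

lemma theta_eq {τ' : ℂ} (h : 0 < τ'.im) (hp : ‖cexp (2 * Real.pi * I * τ')‖ < 1) (w : ℂ) :
    Theta (cexp (2 * Real.pi * I * τ')) (cexp (2 * Real.pi * I * w)) =
      jacobiTheta₂ (w - τ' / 2 + 1 / 2) τ' := by
  have e : ∀ n : ℤ, cexp (Real.pi * I * n + Real.pi * I * τ' * (n ^ 2 - n)) *
      cexp (2 * Real.pi * I * w) ^ n = jacobiTheta₂_term n (w - τ' / 2 + 1 / 2) τ' := by
    intro n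
    rw [jacobiTheta₂_term, ← Complex.exp_int_mul, ← Complex.exp_add]
    congr 1
    ring
  rw [jtp (Complex.exp_ne_zero _) hp (Complex.exp_ne_zero _)
    (fun n : ℤ => cexp (Real.pi * I * n + Real.pi * I * τ' * (n ^ 2 - n)))]
  · simp only [e]; rfl
  · simp
  · intro n
    rw [← Complex.exp_int_mul, neg_mul, ← Complex.exp_add]
    have : -cexp (n * (2 * Real.pi * I * τ') + (Real.pi * I * n + Real.pi * I * τ' * (n ^ 2 - n)))
      = cexp (Real.pi * I) * cexp (n * (2 * Real.pi * I * τ') + (Real.pi * I * n + Real.pi * I * τ' * (n ^ 2 - n))) := by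
      rw [Complex.exp_pi_mul_I]; ring
    rw [this, ← Complex.exp_add]
    congr 1
    push_cast
    ring
  · simp only [e]
    exact (summable_jacobiTheta₂_term_iff _ _).mpr h

lemma br_eq_jacobi {τ : ℂ} {r : ℝ} (hτ : 0 < τ.im) (hr : 0 < r) (u : ℂ) :
    br τ r u = xp τ r (u ^ 2 / (r : ℂ) - u) *
      jacobiTheta₂ (-u / (r * τ) - (-1 / τ) / 2 + 1 / 2) (-1 / τ) := by
  have h0 : τ ≠ 0 := by rintro rfl; simp at hτ
  have hr0 : (r : ℂ) ≠ 0 := by exact_mod_cast hr.ne'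
  rw [br, xp_p τ r hr, ← theta_eq (tau'_im hτ) (p_norm hτ)]
  congr 2
  rw [xp]
  congr 1
  field_simp

lemma br_cont {τ : ℂ} {r : ℝ} (hτ : 0 < τ.im) (hr : 0 < r) : Continuous (br τ r) := by
  have : br τ r = fun u => xp τ r (u ^ 2 / (r : ℂ) - u) *
      jacobiTheta₂ (-u / (r * τ) - (-1 / τ) / 2 + 1 / 2) (-1 / τ) :=
    funext fun u => br_eq_jacobi hτ hr u
  rw [this]
  have hj : Continuous fun v => jacobiTheta₂ v (-1 / τ) :=
    continuous_iff_continuousAt.mpr fun v =>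
      (differentiableAt_jacobiTheta₂_fst v (tau'_im hτ)).continuousAt
  refine Continuous.mul ?_ (hj.comp ?_)
  · unfold xp
    simp only [div_eq_mul_inv]
    fun_prop
  · simp only [div_eq_mul_inv]
    fun_prop

def gT (τ : ℂ) (r : ℝ) (u : ℂ) (n : ℤ) : ℂ :=
  cexp (Real.pi * I * n + -I * Real.pi / (r * τ) * ((u + r * (n - 1 / 2)) ^ 2 / r - r / 4))

lemma gT_eq {τ : ℂ} {r : ℝ} (hτ : 0 < τ.im) (hr : 0 < r) (u : ℂ) (n : ℤ) :
    gT τ r u n = xp τ r (u ^ 2 / (r : ℂ) - u) *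
      jacobiTheta₂_term n (-u / (r * τ) - (-1 / τ) / 2 + 1 / 2) (-1 / τ) := by
  have h0 : τ ≠ 0 := by rintro rfl; simp at hτ
  have hr0 : (r : ℂ) ≠ 0 := by exact_mod_cast hr.ne'
  rw [gT, xp, jacobiTheta₂_term, ← Complex.exp_add]
  congr 1
  field_simp
  ring

lemma gT_summable {τ : ℂ} {r : ℝ} (hτ : 0 < τ.im) (hr : 0 < r) (u : ℂ) :
    Summable (gT τ r u) := by
  rw [funext (gT_eq hτ hr u)]
  exact ((summable_jacobiTheta₂_term_iff _ _).mpr (tau'_im hτ)).mul_left _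

lemma br_eq_tsum {τ : ℂ} {r : ℝ} (hτ : 0 < τ.im) (hr : 0 < r) (u : ℂ) :
    br τ r u = ∑' n, gT τ r u n := by
  rw [br_eq_jacobi hτ hr, funext (gT_eq hτ hr u), tsum_mul_left]
  rfl

def hT (τ : ℂ) (r : ℝ) (e : ℂ) (x : ℂ) (i : ℤ) : ℂ :=
  cexp (-I * Real.pi / (r * τ) * (2 * (x + r * (2 * i + e) / 2) ^ 2 / r - r / 4))

lemma hT_summable {τ : ℂ} {r : ℝ} (hτ : 0 < τ.im) (hr : 0 < r) (e x : ℂ) :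
    Summable (hT τ r e x) := by
  have h0 : τ ≠ 0 := by rintro rfl; simp at hτ
  have hr0 : (r : ℂ) ≠ 0 := by exact_mod_cast hr.ne'
  have : hT τ r e x = fun i => cexp (-I * Real.pi / (r * τ) * (2 * (x + r * e / 2) ^ 2 / r - r / 4)) *
      jacobiTheta₂_term i (-2 * (x + r * e / 2) / (r * τ)) (2 * (-1 / τ)) := by
    funext i
    rw [hT, jacobiTheta₂_term, ← Complex.exp_add]
    congr 1
    field_simp
    ring
  rw [this]
  refine ((summable_jacobiTheta₂_term_iff _ _).mpr ?_).mul_left _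
  have := tau'_im hτ
  simpa using this

def parEquiv : (ℤ × ℤ) ⊕ (ℤ × ℤ) ≃ ℤ × ℤ where
  toFun := Sum.elim (fun q => (q.1 + q.2 + 1, q.1 - q.2 + 1)) (fun q => (q.1 + q.2 + 1, q.1 - q.2))
  invFun q := if (q.1 - q.2) % 2 = 0 then Sum.inl ((q.1 + q.2 - 2) / 2, (q.1 - q.2) / 2)
    else Sum.inr ((q.1 + q.2 - 1) / 2, (q.1 - q.2 - 1) / 2)
  left_inv := by
    rintro (⟨a, b⟩ | ⟨a, b⟩)
    · change (if (a + b + 1 - (a - b + 1)) % 2 = 0 then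
        (Sum.inl ((a + b + 1 + (a - b + 1) - 2) / 2, (a + b + 1 - (a - b + 1)) / 2) : (ℤ × ℤ) ⊕ (ℤ × ℤ))
        else Sum.inr ((a + b + 1 + (a - b + 1) - 1) / 2, (a + b + 1 - (a - b + 1) - 1) / 2)) = _
      rw [if_pos (by omega)]
      congr 2 <;> omega
    · change (if (a + b + 1 - (a - b)) % 2 = 0 then
        (Sum.inl ((a + b + 1 + (a - b) - 2) / 2, (a + b + 1 - (a - b)) / 2) : (ℤ × ℤ) ⊕ (ℤ × ℤ))
        else Sum.inr ((a + b + 1 + (a - b) - 1) / 2, (a + b + 1 - (a - b) - 1) / 2)) = _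
      rw [if_neg (by omega)]
      congr 2 <;> omega
  right_inv := by
    rintro ⟨a, b⟩
    simp only
    split_ifs with h
    · simp only [Sum.elim_inl]
      congr 1 <;> omega
    · simp only [Sum.elim_inr]
      congr 1 <;> omega

lemma br_antisymm {τ : ℂ} {r : ℝ} (hτ : 0 < τ.im) (hr : 0 < r) : ∃ A B : ℂ → ℂ, ∀ x y,
    br τ r (x + y) * br τ r (x - y) = A x * B y - B x * A y := by
  have h0 : τ ≠ 0 := by rintro rfl; simp at hτ
  have hr0 : (r : ℂ) ≠ 0 := by exact_mod_cast hr.ne'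
  refine ⟨fun x => ∑' i, hT τ r 1 x i, fun x => ∑' i, hT τ r 0 x i, fun x y => ?_⟩
  have s1 := (hT_summable hτ hr 1 x).norm
  have s0 := (hT_summable hτ hr 0 x).norm
  have t1 := (hT_summable hτ hr 1 y).norm
  have t0 := (hT_summable hτ hr 0 y).norm
  have ea : ∀ q : ℤ × ℤ, gT τ r (x + y) (parEquiv (Sum.inl q)).1 * gT τ r (x - y) (parEquiv (Sum.inl q)).2
      = hT τ r 1 x q.1 * hT τ r 0 y q.2 := by
    rintro ⟨i, j⟩
    simp only [parEquiv, Equiv.coe_fn_mk, Sum.elim_inl, gT, hT]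
    rw [← Complex.exp_add, ← Complex.exp_add, Complex.exp_eq_exp_iff_exists_int]
    refine ⟨i + 1, ?_⟩
    push_cast
    field_simp
    ring
  have eb : ∀ q : ℤ × ℤ, gT τ r (x + y) (parEquiv (Sum.inr q)).1 * gT τ r (x - y) (parEquiv (Sum.inr q)).2
      = -(hT τ r 0 x q.1 * hT τ r 1 y q.2) := by
    rintro ⟨i, j⟩
    simp only [parEquiv, Equiv.coe_fn_mk, Sum.elim_inr, gT, hT]
    have hneg : ∀ w : ℂ, -cexp w = cexp (Real.pi * I + w) := fun w => by
      rw [Complex.exp_add, Complex.exp_pi_mul_I]; ring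
    rw [← Complex.exp_add, ← Complex.exp_add, hneg,
      Complex.exp_eq_exp_iff_exists_int]
    refine ⟨i, ?_⟩
    push_cast
    field_simp
    ring
  rw [br_eq_tsum hτ hr, br_eq_tsum hτ hr, tsum_mul_tsum_of_summable_norm (gT_summable hτ hr _).norm
    (gT_summable hτ hr _).norm, ← parEquiv.tsum_eq, Summable.tsum_sum]
  · simp only [ea, eb]
    rw [tsum_neg, ← sub_eq_add_neg, tsum_mul_tsum_of_summable_norm s1 t0,
      tsum_mul_tsum_of_summable_norm s0 t1]
  · refine (summable_mul_of_summable_norm s1 t0).congr fun q => ?_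
    simpa using (ea q).symm
  · refine (summable_mul_of_summable_norm s0 t1).neg.congr fun q => ?_
    simpa using (eb q).symm

lemma exp_countable (a c : ℂ) (ha : a ≠ 0) : {u : ℂ | cexp (a * u) = c}.Countable := by
  rcases Set.eq_empty_or_nonempty {u : ℂ | cexp (a * u) = c} with h | ⟨u₀, hu₀⟩
  · rw [h]; exact Set.countable_empty
  · refine (Set.countable_range fun n : ℤ => u₀ + n * (2 * Real.pi * I) / a).mono ?_
    intro u hu
    have : cexp (a * u) = cexp (a * u₀) := by
      rw [Set.mem_ofPred_eq] at hu hu₀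
      rw [hu, hu₀]
    obtain ⟨n, hn⟩ := Complex.exp_eq_exp_iff_exists_int.mp this
    refine ⟨n, ?_⟩
    simp only
    field_simp
    rw [hn]
    ring

lemma br_zeros {τ : ℂ} {r : ℝ} (hτ : 0 < τ.im) (hr : 0 < r) : {u | br τ r u = 0}.Countable := by
  have h0 : τ ≠ 0 := by rintro rfl; simp at hτ
  have hr0 : (r : ℂ) ≠ 0 := by exact_mod_cast hr.ne'
  set p := xp τ r (2 * (r : ℂ)) with hp
  have hpn : ‖p‖ < 1 := by rw [hp, xp_p τ r hr]; exact p_norm hτ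
  have hp0 : p ≠ 0 := Complex.exp_ne_zero _
  set a := -I * Real.pi * 2 / (r * τ) with ha
  have ha0 : a ≠ 0 := by
    rw [ha]
    have := Real.pi_ne_zero
    simp [h0, hr.ne']
  have hx : ∀ u, xp τ r (2 * u) = cexp (a * u) := by
    intro u
    rw [xp, ha]
    congr 1
    ring
  refine ((Set.countable_iUnion fun j : ℕ => exp_countable a (p ^ j)⁻¹ ha0).union
    (Set.countable_iUnion fun j : ℕ => exp_countable a (p ^ (j + 1)) ha0)).mono ?_
  intro u hu
  by_contra hcon
  rw [Set.mem_union, not_or, Set.mem_iUnion, Set.mem_iUnion, not_exists, not_exists] at hcon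
  obtain ⟨c1, c2⟩ := hcon
  simp only [Set.mem_ofPred_eq, ← hx] at c1 c2
  have hz : xp τ r (2 * u) ≠ 0 := Complex.exp_ne_zero _
  rw [Set.mem_ofPred_eq, br] at hu
  rcases mul_eq_zero.mp hu with h | h
  · exact Complex.exp_ne_zero _ h
  · refine theta_ne hpn ?_ ?_ h
    · intro j hj
      exact c1 j (eq_inv_of_mul_eq_one_left (sub_eq_zero.mp hj).symm)
    · intro j hj
      have := (sub_eq_zero.mp hj).symm
      rw [div_eq_one_iff_eq hz] at this
      exact c2 j this.symm

lemma br_odd {τ : ℂ} {r : ℝ} (hτ : 0 < τ.im) (hr : 0 < r) (u : ℂ) : br τ r (-u) = - br τ r u := by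
  obtain ⟨A, B, h⟩ := br_antisymm hτ hr
  have key : ∀ s t, br τ r s * br τ r t = - (br τ r s * br τ r (-t)) := by
    intro s t
    have h1 := h ((s + t) / 2) ((s - t) / 2)
    have h2 := h ((s - t) / 2) ((s + t) / 2)
    rw [show (s + t) / 2 + (s - t) / 2 = s by ring, show (s + t) / 2 - (s - t) / 2 = t by ring] at h1
    rw [show (s - t) / 2 + (s + t) / 2 = s by ring, show (s - t) / 2 - (s + t) / 2 = -t by ring] at h2
    rw [h1, h2]; ring
  by_cases hu : br τ r (-u) = 0
  · have := key u u
    rw [hu] at this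
    have : br τ r u = 0 := by simpa using this
    rw [hu, this, neg_zero]
  · have := key (-u) u
    have h3 : br τ r (-u) * (br τ r u + br τ r (-u)) = 0 := by linear_combination this
    rcases mul_eq_zero.mp h3 with h4 | h4
    · exact absurd h4 hu
    · linear_combination h4

lemma br_zero {τ : ℂ} {r : ℝ} (hτ : 0 < τ.im) (hr : 0 < r) : br τ r 0 = 0 := by
  have := br_odd hτ hr 0
  rw [neg_zero] at this
  linear_combination this / 2

lemma br_three {τ : ℂ} {r : ℝ} (hτ : 0 < τ.im) (hr : 0 < r) (x y u v : ℂ) :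
    br τ r (x + y) * br τ r (x - y) * (br τ r (u + v) * br τ r (u - v)) =
    br τ r (x + u) * br τ r (x - u) * (br τ r (y + v) * br τ r (y - v)) -
    br τ r (x + v) * br τ r (x - v) * (br τ r (y + u) * br τ r (y - u)) := by
  obtain ⟨A, B, h⟩ := br_antisymm hτ hr
  simp only [h]
  ring
end BrFacts
section Algebra

lemma brF_succ (τ : ℂ) (r : ℝ) (u : ℂ) (n : ℕ) : brF τ r u (n + 1) = brF τ r u n * br τ r (u + n) :=
  Finset.prod_range_succ _ _

lemma brF_succ' (τ : ℂ) (r : ℝ) (u : ℂ) (n : ℕ) :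
    brF τ r u (n + 1) = br τ r u * brF τ r (u + 1) n := by
  rw [brF, Finset.prod_range_succ', mul_comm]
  simp only [brF, Nat.cast_zero, add_zero, Nat.cast_add, Nat.cast_one]
  congr 1
  refine Finset.prod_congr rfl fun i _ => ?_
  congr 1
  ring

lemma brF_zero (τ : ℂ) (r : ℝ) (u : ℂ) : brF τ r u 0 = 1 := Finset.prod_range_zero _

lemma brF_ne {τ : ℂ} {r : ℝ} {u : ℂ} {n : ℕ} :
    brF τ r u n ≠ 0 ↔ ∀ i < n, br τ r (u + (i : ℂ)) ≠ 0 := by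
  rw [brF, Finset.prod_ne_zero_iff]
  simp

lemma brF_add (τ : ℂ) (r : ℝ) (u : ℂ) (n d : ℕ) :
    brF τ r u (n + d) = brF τ r u n * brF τ r (u + n) d := by
  rw [brF, Finset.prod_range_add]
  simp only [brF, Nat.cast_add, add_assoc]

def Cd (τ : ℂ) (r : ℝ) (α β γ : ℂ) (n d : ℕ) : ℂ :=
  brF τ r 1 (n + d) / (brF τ r 1 n * brF τ r 1 d) *
    (brF τ r (α - γ) n * brF τ r (α + γ + d) n * brF τ r (α - β) d * brF τ r (α + β + n) d) /
    (brF τ r (β - γ - d) n * brF τ r (γ - β - n) d * brF τ r (β + γ) (n + d))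

lemma Cnk_eq (τ : ℂ) (r : ℝ) (α β γ : ℂ) (n d : ℕ) :
    Cnk τ r (n + d) n α β γ = Cd τ r α β γ n d := by
  rw [Cnk, Cd, Nat.add_sub_cancel_left]
  push_cast
  rw [show α + γ + ((n:ℂ) + d) - n = α + γ + d by ring,
    show β - γ + (n:ℂ) - (n + d) = β - γ - d by ring]

/-- genericity needed for the binomial theorem -/
def Gd (τ : ℂ) (r : ℝ) (K : ℕ) (β γ : ℂ) : Prop :=
  (∀ i : ℤ, |i| < K → br τ r (β - γ + i) ≠ 0) ∧ (∀ i : ℕ, i < K → br τ r (β + γ + i) ≠ 0) ∧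
    ∀ i : ℕ, i < K → br τ r (1 + i) ≠ 0

lemma Gd.mono {τ : ℂ} {r : ℝ} {K L : ℕ} {β γ : ℂ} (h : Gd τ r K β γ) (hL : L ≤ K) :
    Gd τ r L β γ :=
  ⟨fun i hi => h.1 i (hi.trans_le (by exact_mod_cast hL)), fun i hi => h.2.1 i (by omega),
    fun i hi => h.2.2 i (by omega)⟩

lemma Gd.neg {τ : ℂ} {r : ℝ} (hτ : 0 < τ.im) (hr : 0 < r) {K : ℕ} {β γ : ℂ} (h : Gd τ r K β γ)
    (i : ℤ) (hi : |i| < K) : br τ r (γ - β + i) ≠ 0 := by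
  have := h.1 (-i) (by simpa using hi)
  rw [show γ - β + (i:ℂ) = -(β - γ + ((-i : ℤ) : ℂ)) by push_cast; ring, br_odd hτ hr]
  exact neg_ne_zero.mpr this

def Ac (τ : ℂ) (r : ℝ) (α β γ : ℂ) (n d : ℕ) : ℂ :=
  br τ r (α + γ + n + 2 * d) * br τ r (α - γ + n) / (br τ r (β + γ + (n + d)) * br τ r (β - γ + n - d))

def Bc (τ : ℂ) (r : ℝ) (α β γ : ℂ) (n d : ℕ) : ℂ :=
  br τ r (α + β + 2 * n + d) * br τ r (α - β + d) / (br τ r (β + γ + (n + d)) * br τ r (γ - β + d - n))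

lemma pascal {τ : ℂ} {r : ℝ} (hτ : 0 < τ.im) (hr : 0 < r) (α β γ : ℂ) (n d : ℕ)
    (h : Gd τ r (n + d + 2) β γ) :
    Cd τ r α β γ (n + 1) (d + 1) = Ac τ r α β γ n (d + 1) * Cd τ r α β γ n (d + 1) +
      Bc τ r α β γ (n + 1) d * Cd τ r α β γ (n + 1) d := by
  -- nonvanishing facts
  have z1 : brF τ r 1 n ≠ 0 := brF_ne.mpr fun i hi => h.2.2 i (by omega)
  have z2 : brF τ r 1 d ≠ 0 := brF_ne.mpr fun i hi => h.2.2 i (by omega)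
  have z3 : br τ r (1 + n) ≠ 0 := h.2.2 n (by omega)
  have z4 : br τ r (1 + d) ≠ 0 := h.2.2 d (by omega)
  have z5 : brF τ r (β + γ) (n + d + 1) ≠ 0 := brF_ne.mpr fun i hi => h.2.1 i (by omega)
  have z6 : br τ r (β + γ + (n + d + 1)) ≠ 0 := by
    have := h.2.1 (n + d + 1) (by omega)
    push_cast at this
    exact this
  have zP : brF τ r (β - γ - d) n ≠ 0 := brF_ne.mpr fun i hi => by
    have := h.1 (i - d) (by rw [abs_lt]; push_cast; omega)
    push_cast at this
    rwa [show β - γ - (d:ℂ) + i = β - γ + (i - d) by ring]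
  have zQ : brF τ r (γ - β - n) d ≠ 0 := brF_ne.mpr fun i hi => by
    have := h.neg hτ hr (i - n) (by rw [abs_lt]; push_cast; omega)
    push_cast at this
    rwa [show γ - β - (n:ℂ) + i = γ - β + (i - n) by ring]
  have zp0 : br τ r (β - γ - d - 1) ≠ 0 := by
    have := h.1 (-d - 1) (by rw [abs_lt]; push_cast; omega)
    push_cast at this
    rwa [show β - γ - (d:ℂ) - 1 = β - γ + (-d - 1) by ring]
  have zq0 : br τ r (γ - β - n - 1) ≠ 0 := by
    have := h.neg hτ hr (-n - 1) (by rw [abs_lt]; push_cast; omega)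
    push_cast at this
    rwa [show γ - β - (n:ℂ) - 1 = γ - β + (-n - 1) by ring]
  have zpn : br τ r (β - γ + n - d - 1) ≠ 0 := by
    have := h.1 (n - d - 1) (by rw [abs_lt]; push_cast; omega)
    push_cast at this
    rwa [show β - γ + n - (d:ℂ) - 1 = β - γ + (n - d - 1) by ring]
  have zqd : br τ r (γ - β + d - n - 1) ≠ 0 := by
    have := h.neg hτ hr (d - n - 1) (by rw [abs_lt]; push_cast; omega)
    push_cast at this
    rwa [show γ - β + d - (n:ℂ) - 1 = γ - β + (d - n - 1) by ring]
  have zw : br τ r (β - γ + n - d) ≠ 0 := by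
    have := h.1 (n - d) (by rw [abs_lt]; push_cast; omega)
    push_cast at this
    rwa [show β - γ + n - (d:ℂ) = β - γ + (n - d) by ring]
  have ew : br τ r (γ - β - n + d) = - br τ r (β - γ + n - d) := by
    rw [← br_odd hτ hr]; congr 1; ring
  -- relations
  have eP' : brF τ r (β - γ - d - 1) n =
      br τ r (β - γ - d - 1) * brF τ r (β - γ - d) n / br τ r (β - γ + n - d - 1) := by
    rw [eq_div_iff zpn]
    have h1 := brF_succ τ r (β - γ - d - 1) n
    rw [brF_succ', show β - γ - (d:ℂ) - 1 + 1 = β - γ - d by ring,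
      show β - γ - (d:ℂ) - 1 + n = β - γ + n - d - 1 by ring] at h1
    exact h1.symm
  have eQ' : brF τ r (γ - β - n - 1) d =
      br τ r (γ - β - n - 1) * brF τ r (γ - β - n) d / br τ r (γ - β + d - n - 1) := by
    rw [eq_div_iff zqd]
    have h1 := brF_succ τ r (γ - β - n - 1) d
    rw [brF_succ', show γ - β - (n:ℂ) - 1 + 1 = γ - β - n by ring,
      show γ - β - (n:ℂ) - 1 + d = γ - β + d - n - 1 by ring] at h1
    exact h1.symm
  have three := br_three hτ hr (α + (β + γ) / 2 + n + d + 1) ((γ - β) / 2) ((β - γ) / 2 + n + 1)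
    ((γ - β) / 2 + d + 1)
  rw [show α + (β + γ) / 2 + n + d + 1 + (γ - β) / 2 = α + γ + n + d + 1 by ring,
    show α + (β + γ) / 2 + n + d + 1 - (γ - β) / 2 = α + β + n + d + 1 by ring,
    show (β - γ) / 2 + n + 1 + ((γ - β) / 2 + d + 1) = (n:ℂ) + d + 2 by ring,
    show (β - γ) / 2 + n + 1 - ((γ - β) / 2 + d + 1) = β - γ + n - d by ring,
    show α + (β + γ) / 2 + n + d + 1 + ((β - γ) / 2 + n + 1) = α + β + 2 * n + d + 2 by ring,
    show α + (β + γ) / 2 + n + d + 1 - ((β - γ) / 2 + n + 1) = α + γ + d by ring,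
    show α + (β + γ) / 2 + n + d + 1 + ((γ - β) / 2 + d + 1) = α + γ + n + 2 * d + 2 by ring,
    show α + (β + γ) / 2 + n + d + 1 - ((γ - β) / 2 + d + 1) = α + β + n by ring,
    show (γ - β) / 2 + ((γ - β) / 2 + d + 1) = -(β - γ - d - 1) by ring,
    show (γ - β) / 2 - ((γ - β) / 2 + d + 1) = -(1 + d) by ring,
    show (γ - β) / 2 + ((β - γ) / 2 + n + 1) = 1 + n by ring,
    show (γ - β) / 2 - ((β - γ) / 2 + n + 1) = γ - β - n - 1 by ring,
    br_odd hτ hr, br_odd hτ hr] at three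
  unfold Cd Ac Bc
  rw [show n + 1 + (d + 1) = n + d + 1 + 1 by ring, show n + (d + 1) = n + d + 1 by ring,
    show n + 1 + d = n + d + 1 by ring]
  rw [brF_succ τ r 1 (n + d + 1), brF_succ τ r 1 n, brF_succ τ r 1 d, brF_succ τ r (α - γ),
    brF_succ τ r (α - β), brF_succ τ r (β + γ) (n + d + 1),
    brF_succ τ r (α + γ + ((d + 1 : ℕ) : ℂ)), brF_succ τ r (α + β + ((n + 1 : ℕ) : ℂ)),
    brF_succ' τ r (α + γ + d) n, brF_succ' τ r (α + β + n) d,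
    brF_succ' τ r (β - γ - ((d + 1 : ℕ) : ℂ)) n, brF_succ' τ r (γ - β - ((n + 1 : ℕ) : ℂ)) d,
    brF_succ τ r (β - γ - d) n, brF_succ τ r (γ - β - n) d]
  push_cast
  rw [show β - γ - ((d:ℂ) + 1) + 1 = β - γ - d by ring, show γ - β - ((n:ℂ) + 1) + 1 = γ - β - n by ring,
    show β - γ - ((d:ℂ) + 1) = β - γ - d - 1 by ring, show γ - β - ((n:ℂ) + 1) = γ - β - n - 1 by ring,
    show (1:ℂ) + (n + d + 1) = n + d + 2 by ring,
    show α + γ + ((d:ℂ) + 1) + n = α + γ + n + d + 1 by ring,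
    show α + β + ((n:ℂ) + 1) + d = α + β + n + d + 1 by ring,
    show α + γ + (d:ℂ) + 1 = α + γ + (d + 1) by ring,
    show α + β + (n:ℂ) + 1 = α + β + (n + 1) by ring,
    show (n:ℂ) + (d + 1) = n + d + 1 by ring, show (n:ℂ) + 1 + d = n + d + 1 by ring,
    show α + γ + (n:ℂ) + 2 * (d + 1) = α + γ + n + 2 * d + 2 by ring,
    show α + β + 2 * ((n:ℂ) + 1) + d = α + β + 2 * n + d + 2 by ring,
    show β - γ + (n:ℂ) - (d + 1) = β - γ + n - d - 1 by ring,
    show γ - β + (d:ℂ) - (n + 1) = γ - β + d - n - 1 by ring,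
    show β - γ - (d:ℂ) + n = β - γ + n - d by ring, ew, eP', eQ']
  generalize brF τ r 1 n = c1 at *
  generalize brF τ r 1 d = c2 at *
  generalize brF τ r 1 (n + d + 1) = c3 at *
  generalize brF τ r (β + γ) (n + d + 1) = c4 at *
  generalize brF τ r (β - γ - d) n = c5 at *
  generalize brF τ r (γ - β - n) d = c6 at *
  generalize brF τ r (α - γ) n = c7 at *
  generalize brF τ r (α - β) d = c8 at *
  generalize brF τ r (α + γ + (d + 1)) n = c9 at *
  generalize brF τ r (α + β + (n + 1)) d = c10 at *
  generalize br τ r (1 + n) = b1 at *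
  generalize br τ r (1 + d) = b2 at *
  generalize br τ r (β + γ + (n + d + 1)) = b3 at *
  generalize br τ r (β - γ - d - 1) = b4 at *
  generalize br τ r (γ - β - n - 1) = b5 at *
  generalize br τ r (β - γ + n - d - 1) = b6 at *
  generalize br τ r (γ - β + d - n - 1) = b7 at *
  generalize br τ r (β - γ + n - d) = b8 at *
  generalize br τ r (n + d + 2) = b9 at *
  generalize br τ r (α + γ + n + d + 1) = b10 at *
  generalize br τ r (α + β + n + d + 1) = b11 at *
  generalize br τ r (α + β + 2 * n + d + 2) = b12 at *
  generalize br τ r (α + γ + n + 2 * d + 2) = b13 at *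
  generalize br τ r (α + γ + d) = b14 at *
  generalize br τ r (α + β + n) = b15 at *
  generalize br τ r (α - γ + n) = b16 at *
  generalize br τ r (α - β + d) = b17 at *
  field_simp
  linear_combination c3*c7*b16*c9*c8*b17*c10 * three
end Algebra
section Binomial

lemma pascal_left {τ : ℂ} {r : ℝ} (α β γ : ℂ) (d : ℕ)
    (h : Gd τ r (d + 1) β γ) :
    Cd τ r α β γ 0 (d + 1) = Bc τ r α β γ 0 d * Cd τ r α β γ 0 d := by
  have z2 : brF τ r 1 d ≠ 0 := brF_ne.mpr fun i hi => h.2.2 i (by omega)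
  have z4 : br τ r (1 + d) ≠ 0 := h.2.2 d (by omega)
  unfold Cd Bc
  simp only [brF_succ, brF_zero, Nat.cast_zero, zero_add, add_zero, sub_zero, mul_zero]
  rw [show α + β + (d:ℂ) = α + β + d by ring]
  field_simp

lemma pascal_right {τ : ℂ} {r : ℝ} (α β γ : ℂ) (n : ℕ)
    (h : Gd τ r (n + 1) β γ) :
    Cd τ r α β γ (n + 1) 0 = Ac τ r α β γ n 0 * Cd τ r α β γ n 0 := by
  have z2 : brF τ r 1 n ≠ 0 := brF_ne.mpr fun i hi => h.2.2 i (by omega)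
  have z4 : br τ r (1 + n) ≠ 0 := h.2.2 n (by omega)
  unfold Cd Ac
  simp only [brF_succ, brF_zero, Nat.cast_zero, zero_add, add_zero, sub_zero, mul_zero]
  field_simp

def pm (τ : ℂ) (r : ℝ) (z a : ℂ) (k : ℕ) : ℂ :=
  ∏ j ∈ Finset.range k, (br τ r (a + j + z) * br τ r (a + j - z))

lemma pm_succ (τ : ℂ) (r : ℝ) (z a : ℂ) (k : ℕ) :
    pm τ r z a (k + 1) = pm τ r z a k * (br τ r (a + k + z) * br τ r (a + k - z)) :=
  Finset.prod_range_succ _ _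

lemma pm_zero (τ : ℂ) (r : ℝ) (z a : ℂ) : pm τ r z a 0 = 1 := Finset.prod_range_zero _

lemma pm_add (τ : ℂ) (r : ℝ) (z a : ℂ) (n d : ℕ) :
    pm τ r z a (n + d) = pm τ r z a n * pm τ r z (a + n) d := by
  rw [pm, Finset.prod_range_add]
  simp only [pm, Nat.cast_add, add_assoc]

lemma pm_step {τ : ℂ} {r : ℝ} (hτ : 0 < τ.im) (hr : 0 < r) (α β γ z : ℂ) (n d : ℕ)
    (h : Gd τ r (n + d + 1) β γ) :
    br τ r (α + (n + d : ℕ) + z) * br τ r (α + (n + d : ℕ) - z) =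
      Ac τ r α β γ n d * (br τ r (β + n + z) * br τ r (β + n - z)) +
      Bc τ r α β γ n d * (br τ r (γ + d + z) * br τ r (γ + d - z)) := by
  have z6 : br τ r (β + γ + (n + d)) ≠ 0 := by
    have := h.2.1 (n + d) (by omega)
    push_cast at this
    exact this
  have zw : br τ r (β - γ + n - d) ≠ 0 := by
    have := h.1 (n - d) (by rw [abs_lt]; push_cast; omega)
    push_cast at this
    rwa [show β - γ + n - (d:ℂ) = β - γ + (n - d) by ring]
  have ew : br τ r (γ - β + d - n) = - br τ r (β - γ + n - d) := by
    rw [← br_odd hτ hr]; congr 1; ring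
  have three := br_three hτ hr (α + n + d) z (β + n) (γ + d)
  rw [show β + (n:ℂ) + (γ + d) = β + γ + (n + d) by ring, show β + (n:ℂ) - (γ + d) = β - γ + n - d by ring,
    show α + (n:ℂ) + d + (β + n) = α + β + 2 * n + d by ring,
    show α + (n:ℂ) + d - (β + n) = α - β + d by ring,
    show α + (n:ℂ) + d + (γ + d) = α + γ + n + 2 * d by ring,
    show α + (n:ℂ) + d - (γ + d) = α - γ + n by ring,
    show z - (γ + d) = -(γ + d - z) by ring, show z - (β + n) = -(β + n - z) by ring,
    show z + (γ + d) = γ + d + z by ring, show z + (β + n) = β + n + z by ring,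
    br_odd hτ hr, br_odd hτ hr] at three
  unfold Ac Bc
  rw [ew]
  push_cast
  rw [show α + ((n:ℂ) + d) = α + n + d by ring]
  generalize br τ r (α + β + 2 * n + d) = b1 at *
  generalize br τ r (α + γ + n + 2 * d) = b2 at *
  field_simp
  linear_combination three

lemma binom {τ : ℂ} {r : ℝ} (hτ : 0 < τ.im) (hr : 0 < r) (α β γ z : ℂ) (k : ℕ)
    (h : Gd τ r k β γ) :
    pm τ r z α k = ∑ q ∈ Finset.HasAntidiagonal.antidiagonal k,
      Cd τ r α β γ q.1 q.2 * (pm τ r z β q.1 * pm τ r z γ q.2) := by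
  induction k with
  | zero =>
    simp [Cd, pm_zero, brF_zero]
  | succ k ih =>
    let F : ℕ × ℕ → ℂ := fun q => match q with
      | (0, _) => 0
      | (n + 1, d) => Ac τ r α β γ n d * Cd τ r α β γ n d * (pm τ r z β (n + 1) * pm τ r z γ d)
    let G : ℕ × ℕ → ℂ := fun q => match q with
      | (_, 0) => 0
      | (n, d + 1) => Bc τ r α β γ n d * Cd τ r α β γ n d * (pm τ r z β n * pm τ r z γ (d + 1))
    have hFG : ∀ q ∈ Finset.HasAntidiagonal.antidiagonal (k + 1),
        Cd τ r α β γ q.1 q.2 * (pm τ r z β q.1 * pm τ r z γ q.2) = F q + G q := by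
      rintro ⟨n, d⟩ hq
      rw [Finset.HasAntidiagonal.mem_antidiagonal] at hq
      simp only at hq
      match n, d with
      | 0, 0 => omega
      | 0, d + 1 =>
        simp only [F, G, zero_add]
        rw [pascal_left _ _ _ _ (h.mono (by omega))]
      | n + 1, 0 =>
        simp only [F, G, add_zero]
        rw [pascal_right _ _ _ _ (h.mono (by omega))]
      | n + 1, d + 1 =>
        simp only [F, G]
        rw [pascal hτ hr _ _ _ _ _ (h.mono (by omega))]
        ring
    rw [Finset.sum_congr rfl hFG, Finset.sum_add_distrib, Finset.Nat.sum_antidiagonal_succ (f := F),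
      Finset.Nat.sum_antidiagonal_succ' (f := G), pm_succ, ih (h.mono (by omega)), Finset.sum_mul]
    simp only [F, G, zero_add]
    rw [← Finset.sum_add_distrib]
    refine Finset.sum_congr rfl ?_
    rintro ⟨n, d⟩ hq
    rw [Finset.HasAntidiagonal.mem_antidiagonal] at hq
    simp only at hq
    subst hq
    rw [pm_step hτ hr α β γ z n d h, pm_succ, pm_succ]
    ring
end Binomial

section Expansion

lemma binom_range {τ : ℂ} {r : ℝ} (hτ : 0 < τ.im) (hr : 0 < r) (α β γ z : ℂ) (k : ℕ)
    (h : Gd τ r k β γ) :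
    pm τ r z α k = ∑ n ∈ Finset.range (k + 1),
      Cnk τ r k n α β γ * (pm τ r z β n * pm τ r z γ (k - n)) := by
  rw [binom hτ hr α β γ z k h, Finset.Nat.sum_antidiagonal_eq_sum_range_succ_mk]
  refine Finset.sum_congr rfl fun n hn => ?_
  rw [Finset.mem_range] at hn
  obtain ⟨d, rfl⟩ := Nat.exists_eq_add_of_le (Nat.lt_succ_iff.mp hn)
  rw [Cnk_eq, Nat.add_sub_cancel_left]

lemma sum_reindex (k n : ℕ) (hn : n ≤ k) (f : ℕ → ℕ → ℂ) :
    ∑ j ∈ Finset.range (n + 1), ∑ i ∈ Finset.range (k - j + 1), f j (j + i) =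
      ∑ m ∈ Finset.range (k + 1), ∑ j ∈ Finset.range (min n m + 1), f j m := by
  rw [Finset.sum_sigma', Finset.sum_sigma']
  refine Finset.sum_bij' (fun x _ => ⟨x.1 + x.2, x.1⟩) (fun x _ => ⟨x.2, x.1 - x.2⟩) ?_ ?_ ?_ ?_ ?_
  · rintro ⟨j, i⟩ h
    simp only [Finset.mem_sigma, Finset.mem_range] at h ⊢
    omega
  · rintro ⟨j, i⟩ h
    simp only [Finset.mem_sigma, Finset.mem_range] at h ⊢
    omega
  · rintro ⟨j, i⟩ h
    simp
  · rintro ⟨j, i⟩ h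
    simp only [Finset.mem_sigma, Finset.mem_range] at h
    have : i + (j - i) = j := by omega
    simp [this]
  · rintro ⟨j, i⟩ h
    rfl

lemma expansion {τ : ℂ} {r : ℝ} (hτ : 0 < τ.im) (hr : 0 < r) (α β γ δ z : ℂ) (k n : ℕ)
    (hn : n ≤ k) (H1 : Gd τ r n γ (β + k - n)) (H2 : ∀ j ≤ n, Gd τ r (k - j) (γ + j) δ) :
    pm τ r z α n * pm τ r z β (k - n) = ∑ m ∈ Finset.range (k + 1),
      Rnm τ r k n m α β γ δ * (pm τ r z γ m * pm τ r z δ (k - m)) := by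
  have e := sum_reindex k n hn (fun j m => Cnk τ r n j α γ (β + (k : ℂ) - (n : ℂ)) *
    Cnk τ r (k - j) (m - j) β (γ + (j : ℂ)) δ * (pm τ r z γ m * pm τ r z δ (k - m)))
  simp only [Rnm, Finset.sum_mul]
  rw [← e, binom_range hτ hr α γ (β + k - n) z n H1, Finset.sum_mul]
  refine Finset.sum_congr rfl fun j hj => ?_
  have hj' : j ≤ n := by rw [Finset.mem_range] at hj; omega
  have e2 : pm τ r z β (k - n) * pm τ r z (β + k - n) (n - j) = pm τ r z β (k - j) := by
    rw [show k - j = (k - n) + (n - j) by omega, pm_add]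
    congr 2
    push_cast [hn]
    ring
  have e3 := binom_range hτ hr β (γ + j) δ z (k - j) (H2 j hj')
  calc _ = Cnk τ r n j α γ (β + (k : ℂ) - (n : ℂ)) * pm τ r z γ j *
        (pm τ r z β (k - n) * pm τ r z (β + k - n) (n - j)) := by ring
    _ = _ := by
      rw [e2, e3, Finset.mul_sum]
      refine Finset.sum_congr rfl fun i _ => ?_
      rw [Nat.add_sub_cancel_left, pm_add, Nat.sub_sub]
      ring

lemma pm_ne {τ : ℂ} {r : ℝ} {z a : ℂ} {k : ℕ}
    (h : ∀ j < k, br τ r (a + j + z) ≠ 0 ∧ br τ r (a + j - z) ≠ 0) : pm τ r z a k ≠ 0 := by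
  rw [pm, Finset.prod_ne_zero_iff]
  intro j hj
  exact mul_ne_zero (h j (by simpa using hj)).1 (h j (by simpa using hj)).2

lemma pm_eq_zero {τ : ℂ} {r : ℝ} (hτ : 0 < τ.im) (hr : 0 < r) (a : ℂ) {j k : ℕ} (hj : j < k) :
    pm τ r (a + j) a k = 0 := by
  rw [pm]
  refine Finset.prod_eq_zero (Finset.mem_range.mpr hj) ?_
  rw [sub_self, br_zero hτ hr, mul_zero]

lemma indep {τ : ℂ} {r : ℝ} (hτ : 0 < τ.im) (hr : 0 < r) (γ δ : ℂ) (k : ℕ) (c : ℕ → ℂ)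
    (h : ∀ z, ∑ m ∈ Finset.range (k + 1), c m * (pm τ r z γ m * pm τ r z δ (k - m)) = 0)
    (h1 : ∀ i : ℤ, br τ r (2 * γ + i) ≠ 0) (h2 : ∀ i : ℤ, br τ r (γ + δ + i) ≠ 0)
    (h3 : ∀ i : ℤ, br τ r (γ - δ + i) ≠ 0) (h4 : ∀ i : ℕ, i < k → br τ r (1 + i) ≠ 0)
    (m : ℕ) (hm : m ≤ k) : c m = 0 := by
  induction m using Nat.strong_induction_on with
  | _ m ih =>
    have hz := h (γ + m)
    rw [Finset.sum_eq_single m] at hz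
    · have p1 : pm τ r (γ + m) γ m ≠ 0 := by
        refine pm_ne fun j hj => ⟨?_, ?_⟩
        · have := h1 (j + m)
          push_cast at this
          rwa [show γ + (j:ℂ) + (γ + m) = 2 * γ + (j + m) by ring]
        · have := h4 (m - j - 1) (by omega)
          rw [show γ + (j:ℂ) - (γ + m) = -(1 + ((m - j - 1 : ℕ) : ℂ)) by
            rw [Nat.sub_sub, Nat.cast_sub (by omega)]; push_cast; ring, br_odd hτ hr]
          exact neg_ne_zero.mpr this
      have p2 : pm τ r (γ + m) δ (k - m) ≠ 0 := by
        refine pm_ne fun j hj => ⟨?_, ?_⟩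
        · have := h2 (j + m)
          push_cast at this
          rwa [show δ + (j:ℂ) + (γ + m) = γ + δ + (j + m) by ring]
        · have := h3 (m - j)
          push_cast at this
          rw [show δ + (j:ℂ) - (γ + m) = -(γ - δ + (m - j)) by ring, br_odd hτ hr]
          exact neg_ne_zero.mpr this
      exact (mul_eq_zero.mp hz).resolve_right (mul_ne_zero p1 p2)
    · intro b hb hbm
      rcases lt_or_gt_of_ne hbm with hlt | hgt
      · rw [ih b hlt (by omega), zero_mul]
      · rw [pm_eq_zero hτ hr γ hgt]; ring
    · intro hm'
      exact absurd (Finset.mem_range.mpr (by omega)) hm'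

lemma Gd_of {τ : ℂ} {r : ℝ} (hτ : 0 < τ.im) (hr : 0 < r) {k : ℕ} {β γ : ℂ}
    (h : ∀ n ≤ k, CdenomNZ τ r k n β γ) : Gd τ r k β γ := by
  have hk := h k le_rfl
  have h0 := h 0 (Nat.zero_le _)
  simp only [CdenomNZ, brF_ne] at hk h0
  refine ⟨fun i hi => ?_, hk.2.2.2.2, hk.1⟩
  rcases le_total 0 i with hi0 | hi0
  · obtain ⟨j, rfl⟩ := Int.eq_ofNat_of_zero_le hi0
    have := hk.2.2.1 j (by simpa using hi)
    rw [show β - γ + (k:ℂ) - k + j = β - γ + ((j:ℤ):ℂ) by push_cast; ring] at this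
    exact this
  · obtain ⟨j, hj⟩ := Int.eq_ofNat_of_zero_le (neg_nonneg.mpr hi0)
    obtain rfl : i = -(j:ℤ) := by omega
    have := h0.2.2.2.1 j (by simpa using hi)
    rw [show β - γ + ((-(j:ℤ) : ℤ):ℂ) = -(γ - β - ((0:ℕ):ℂ) + j) by push_cast; ring, br_odd hτ hr]
    exact neg_ne_zero.mpr this

lemma Gd_gen {τ : ℂ} {r : ℝ} {k K : ℕ} {a b : ℂ} (hK : K ≤ k)
    (h2 : ∀ i : ℤ, br τ r (a + b + i) ≠ 0)
    (h3 : ∀ i : ℤ, br τ r (a - b + i) ≠ 0) (h4 : ∀ i : ℕ, i < k → br τ r (1 + i) ≠ 0)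
    (x y : ℤ) : Gd τ r K (a + x) (b + y) := by
  refine ⟨fun i _ => ?_, fun i _ => ?_, fun i hi => h4 i (by omega)⟩
  · have := h3 (x - y + i)
    push_cast at this
    rwa [show a + (x:ℂ) - (b + y) + i = a - b + (x - y + i) by ring]
  · have := h2 (x + y + i)
    push_cast at this
    rwa [show a + (x:ℂ) + (b + y) + i = a + b + (x + y + i) by ring]

lemma generic {τ : ℂ} {r : ℝ} (hτ : 0 < τ.im) (hr : 0 < r)
    (k n m : ℕ) (hn : n ≤ k) (hm : m ≤ k) (α β γ δ ρ σ : ℂ)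
    (hd2 : ∀ l ≤ k, RdenomNZ τ r k n l β ρ σ)
    (g1 : ∀ i : ℤ, br τ r (2 * γ + i) ≠ 0) (g2 : ∀ i : ℤ, br τ r (γ + δ + i) ≠ 0)
    (g3 : ∀ i : ℤ, br τ r (γ - δ + i) ≠ 0)
    (g4 : ∀ i : ℤ, br τ r (γ + β + i) ≠ 0) (g5 : ∀ i : ℤ, br τ r (γ - β + i) ≠ 0)
    (g6 : ∀ i : ℤ, br τ r (γ + σ + i) ≠ 0) (g7 : ∀ i : ℤ, br τ r (γ - σ + i) ≠ 0) :
    Rnm τ r k n m α β γ δ =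
      ∑ l ∈ Finset.range (k + 1), Rnm τ r k n l α β ρ σ * Rnm τ r k l m ρ σ γ δ := by
  have h4 : ∀ i : ℕ, i < k → br τ r (1 + i) ≠ 0 :=
    brF_ne.mp (hd2 k le_rfl 0 (Nat.zero_le _)).2.1
  have H1 : Gd τ r n ρ (β + k - n) :=
    Gd_of hτ hr fun j hj => (hd2 k le_rfl j (by omega)).1
  have H2 : ∀ j ≤ n, Gd τ r (k - j) (ρ + j) σ := fun j hj =>
    Gd_of hτ hr fun i hi => by
      have := (hd2 (i + j) (by omega) j (by omega)).2
      rwa [Nat.add_sub_cancel] at this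
  have A : ∀ l ≤ k, ∀ j ≤ l, Gd τ r (k - j) (γ + j) δ := fun l hl j hj => by
    have := Gd_gen (K := k - j) (by omega) g2 g3 h4 j 0
    simpa using this
  have B : ∀ l ≤ k, Gd τ r l γ (σ + k - l) := fun l hl => by
    have := Gd_gen (K := l) (by omega) g6 g7 h4 0 (k - l)
    push_cast at this
    rwa [add_zero, ← add_sub_assoc] at this
  have B' : Gd τ r n γ (β + k - n) := by
    have := Gd_gen (K := n) (by omega) g4 g5 h4 0 (k - n)
    push_cast at this
    rwa [add_zero, ← add_sub_assoc] at this
  rw [← sub_eq_zero]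
  refine indep hτ hr γ δ k (fun m => Rnm τ r k n m α β γ δ -
      ∑ l ∈ Finset.range (k + 1), Rnm τ r k n l α β ρ σ * Rnm τ r k l m ρ σ γ δ) ?_
    g1 g2 g3 h4 m hm
  intro z
  have E1 := expansion hτ hr α β γ δ z k n hn B' (A n hn)
  have E2 := expansion hτ hr α β ρ σ z k n hn H1 H2
  have E3 : ∑ l ∈ Finset.range (k + 1), Rnm τ r k n l α β ρ σ * (pm τ r z ρ l * pm τ r z σ (k - l)) =
      ∑ m ∈ Finset.range (k + 1), (∑ l ∈ Finset.range (k + 1),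
        Rnm τ r k n l α β ρ σ * Rnm τ r k l m ρ σ γ δ) * (pm τ r z γ m * pm τ r z δ (k - m)) := by
    simp only [Finset.sum_mul]
    rw [Finset.sum_comm]
    refine Finset.sum_congr rfl fun l hl => ?_
    have hl' : l ≤ k := by rw [Finset.mem_range] at hl; omega
    rw [expansion hτ hr ρ σ γ δ z k l hl' (B l hl') (A l hl'), Finset.mul_sum]
    exact Finset.sum_congr rfl fun _ _ => by ring
  simp only [sub_mul]
  rw [Finset.sum_sub_distrib, ← E1, ← E3, ← E2, sub_self]

lemma bad_countable {τ : ℂ} {r : ℝ} (hτ : 0 < τ.im) (hr : 0 < r) (c s : ℂ) (hs : s ≠ 0) :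
    {t : ℂ | ∃ i : ℤ, br τ r (c + s * t + i) = 0}.Countable := by
  have : {t : ℂ | ∃ i : ℤ, br τ r (c + s * t + i) = 0} =
      ⋃ i : ℤ, (fun t : ℂ => c + s * t + i) ⁻¹' {u | br τ r u = 0} := by
    ext t; simp
  rw [this]
  refine Set.countable_iUnion fun i => (br_zeros hτ hr).preimage ?_
  intro x y hxy
  simpa [hs] using hxy

lemma Cnk_cont {τ : ℂ} {r : ℝ} (hτ : 0 < τ.im) (hr : 0 < r) (k n : ℕ) {a b c : ℂ → ℂ} {t : ℂ}
    (ha : Continuous a) (hb : Continuous b) (hc : Continuous c)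
    (h : CdenomNZ τ r k n (b t) (c t)) :
    ContinuousAt (fun t => Cnk τ r k n (a t) (b t) (c t)) t := by
  have hF : ∀ (f : ℂ → ℂ) (N : ℕ), Continuous f → Continuous fun t => brF τ r (f t) N := by
    intro f N hf
    unfold brF
    exact continuous_finsetProd _ fun j _ => (br_cont hτ hr).comp (hf.add continuous_const)
  unfold Cnk
  obtain ⟨_, _, h3, h4, h5⟩ := h
  refine ContinuousAt.div (Continuous.continuousAt ?_) (Continuous.continuousAt ?_)
    (mul_ne_zero (mul_ne_zero h3 h4) h5)
  · refine continuous_const.mul ?_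
    refine (((hF _ _ ?_).mul (hF _ _ ?_)).mul (hF _ _ ?_)).mul (hF _ _ ?_) <;> fun_prop
  · refine ((hF _ _ ?_).mul (hF _ _ ?_)).mul (hF _ _ ?_) <;> fun_prop

lemma Rnm_cont {τ : ℂ} {r : ℝ} (hτ : 0 < τ.im) (hr : 0 < r) (k n m : ℕ) (α β : ℂ)
    {c d : ℂ → ℂ} {t : ℂ} (hc : Continuous c) (hd : Continuous d)
    (h : RdenomNZ τ r k n m β (c t) (d t)) :
    ContinuousAt (fun t => Rnm τ r k n m α β (c t) (d t)) t := by
  unfold Rnm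
  refine tendsto_finsetSum _ fun j hj => ?_
  have hj' := h j (by rw [Finset.mem_range] at hj; omega)
  exact (Cnk_cont hτ hr n j continuous_const hc continuous_const hj'.1).mul
    (Cnk_cont hτ hr (k - j) (m - j) continuous_const (hc.add continuous_const) hd hj'.2)

end Expansion

/-- Addition formula for the elliptic 6j-symbols. -/
theorem sixj_addition (τ : ℂ) (r : ℝ) (hτ : 0 < τ.im) (hr : 0 < r)
    (k n m : ℕ) (hn : n ≤ k) (hm : m ≤ k) (α β γ δ ρ σ : ℂ)
    (hd1 : RdenomNZ τ r k n m β γ δ)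
    (hd2 : ∀ l ≤ k, RdenomNZ τ r k n l β ρ σ)
    (hd3 : ∀ l ≤ k, RdenomNZ τ r k l m σ γ δ) :
    Rnm τ r k n m α β γ δ =
      ∑ l ∈ Finset.range (k + 1), Rnm τ r k n l α β ρ σ * Rnm τ r k l m ρ σ γ δ := by
  have cγ : Continuous fun t : ℂ => γ + t := by fun_prop
  have cδ : Continuous fun t : ℂ => δ + 2 * t := by fun_prop
  have L1 : ContinuousAt (fun t => Rnm τ r k n m α β (γ + t) (δ + 2 * t)) 0 :=
    Rnm_cont hτ hr k n m α β cγ cδ (by simpa using hd1)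
  have L2 : ContinuousAt (fun t => ∑ l ∈ Finset.range (k + 1),
      Rnm τ r k n l α β ρ σ * Rnm τ r k l m ρ σ (γ + t) (δ + 2 * t)) 0 := by
    refine tendsto_finsetSum _ fun l hl => ?_
    exact continuousAt_const.mul (Rnm_cont hτ hr k l m ρ σ cγ cδ
      (by simpa using hd3 l (by rw [Finset.mem_range] at hl; omega)))
  have hcount := (((((((bad_countable hτ hr (2 * γ) 2 (by norm_num)).union
    (bad_countable hτ hr (γ + δ) 3 (by norm_num))).union
    (bad_countable hτ hr (γ - δ) (-1) (by norm_num))).union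
    (bad_countable hτ hr (γ + β) 1 (by norm_num))).union
    (bad_countable hτ hr (γ - β) 1 (by norm_num))).union
    (bad_countable hτ hr (γ + σ) 1 (by norm_num))).union
    (bad_countable hτ hr (γ - σ) 1 (by norm_num)))
  have hdense := hcount.dense_compl ℂ
  have hfreq : ∃ᶠ t in nhds (0 : ℂ), Rnm τ r k n m α β (γ + t) (δ + 2 * t) =
      ∑ l ∈ Finset.range (k + 1),
        Rnm τ r k n l α β ρ σ * Rnm τ r k l m ρ σ (γ + t) (δ + 2 * t) := by
    refine (mem_closure_iff_frequently.mp (hdense 0)).mono fun t ht => ?_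
    simp only [Set.mem_compl_iff, Set.mem_union, Set.mem_ofPred_eq, not_or, not_exists] at ht
    obtain ⟨⟨⟨⟨⟨⟨t1, t2⟩, t3⟩, t4⟩, t5⟩, t6⟩, t7⟩ := ht
    refine generic hτ hr k n m hn hm α β (γ + t) (δ + 2 * t) ρ σ hd2 ?_ ?_ ?_ ?_ ?_ ?_ ?_
    · intro i; convert t1 i using 2; ring
    · intro i; convert t2 i using 2; ring
    · intro i; convert t3 i using 2; ring
    · intro i; convert t4 i using 2; ring
    · intro i; convert t5 i using 2; ring
    · intro i; convert t6 i using 2; ring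
    · intro i; convert t7 i using 2; ring
  have := tendsto_nhds_unique_of_frequently_eq L1 L2 hfreq
  simpa using this

end Ell
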